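/- arXiv:math/9811102 — 3 statements merged into one kernel-verified Lean document; each statement's English description precedes it below -/
import Mathlib

section
/- Let $C_n$ be a cyclic group of order $n$. Every virtual complex character of $C_n$ (i.e. $\mathbb{Z}$-linear combination of the irreducible complex characters) all of whose values lie in $\mathbb{Q}$ (equivalently in $\mathbb{Z}$) is a $\mathbb{Z}$-linear combination of the induced characters $\mathrm{Ind}^{C_n}_{H}\rho_0$ of the trivial character $\rho_0$, where $H$ runs through the subgroups of $C_n$; that is, $\langle \mathrm{Ind}^{C_n}_{H}\rho_0 \mid H\le C_n\rangle = R_{\mathbb{Q}}C_n$. -/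
/-! ### Virtual characters of abelian groups, permutation characters, and the quotient
`R_ℂ G / E_G` with its conjugation involution. -/

/-- The additive group of virtual complex characters of an abelian group `G`
(`ℤ`-linear combinations of the irreducible characters, which for an abelian group are
exactly the homomorphisms `G → ℂˣ`), as a subgroup of the functions `G → ℂ`. -/
noncomputable def RCa (G : Type*) [CommGroup G] : AddSubgroup (G → ℂ) :=
  AddSubgroup.closure {f | ∃ χ : G →* ℂˣ, f = fun g => (χ g : ℂ)}

/-- The permutation character of the action of `G` on `G ⧸ H`, i.e. the character of the
representation induced from the trivial character of `H`; its value at `g` is the number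
of fixed cosets. -/
noncomputable def permChar {G : Type*} [Group G] (H : Subgroup G) : G → ℂ :=
  fun g => (Nat.card {x : G ⧸ H // g • x = x} : ℂ)

/-- The subgroup of `G → ℂ` generated by the characters induced from the trivial
character of subgroups of `G`. -/
noncomputable def EG (G : Type*) [Group G] : AddSubgroup (G → ℂ) :=
  AddSubgroup.closure {f | ∃ H : Subgroup G, f = permChar H}

/-- The quotient `R_ℂ G / E_G` of the group of virtual characters. -/
abbrev RTilde (G : Type*) [CommGroup G] :=
  (RCa G) ⧸ ((EG G).addSubgroupOf (RCa G))

/-- Pointwise complex conjugation of functions `G → ℂ`, as an additive homomorphism. -/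
def conjFun (G : Type*) : (G → ℂ) →+ (G → ℂ) where
  toFun f := fun g => starRingEnd ℂ (f g)
  map_zero' := by funext g; simp
  map_add' f₁ f₂ := by funext g; simp

lemma conjFun_RCa_le (G : Type*) [CommGroup G] : (RCa G).map (conjFun G) ≤ RCa G := by
  rw [RCa, AddMonoidHom.map_closure, AddSubgroup.closure_le]
  rintro _ ⟨f, ⟨χ, rfl⟩, rfl⟩
  apply AddSubgroup.subset_closure
  refine ⟨(Units.map ((starRingEnd ℂ) : ℂ →* ℂ)).comp χ, ?_⟩
  funext g
  simp [conjFun]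

lemma conjFun_EG_le (G : Type*) [Group G] : (EG G).map (conjFun G) ≤ EG G := by
  rw [EG, AddMonoidHom.map_closure, AddSubgroup.closure_le]
  rintro _ ⟨f, ⟨H, rfl⟩, rfl⟩
  apply AddSubgroup.subset_closure
  refine ⟨H, ?_⟩
  funext g
  simp [conjFun, permChar]

/-- The involution of `R_ℂ G / E_G` induced by complex conjugation of characters. -/
noncomputable def conjQ (G : Type*) [CommGroup G] : RTilde G →+ RTilde G :=
  QuotientAddGroup.map _ _
    (((conjFun G).comp (RCa G).subtype).codRestrict (RCa G)
      (fun x => conjFun_RCa_le G (AddSubgroup.mem_map_of_mem _ x.2)))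
    (by
      intro x hx
      rw [AddSubgroup.mem_addSubgroupOf] at hx
      rw [AddSubgroup.mem_comap, AddSubgroup.mem_addSubgroupOf]
      exact conjFun_EG_le G (AddSubgroup.mem_map_of_mem _ hx))

/-- The subgroup `𝔸_G = {a ∈ R_ℂ G / E_G : a + ā = 0}`. -/
noncomputable def AG (G : Type*) [CommGroup G] : AddSubgroup (RTilde G) :=
  (AddMonoidHom.id (RTilde G) + conjQ G).ker

lemma mem_AG_iff {G : Type*} [CommGroup G] (a : RTilde G) :
    a ∈ AG G ↔ a + conjQ G a = 0 := Iff.rfl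

/-- The subgroup of functions `G → ℂ` all of whose values are rational. -/
noncomputable def ratValued (G : Type*) : AddSubgroup (G → ℂ) where
  carrier := {f | ∀ g, ∃ q : ℚ, f g = (q : ℂ)}
  zero_mem' := fun g => ⟨0, by simp⟩
  add_mem' := by
    rintro f₁ f₂ h₁ h₂ g
    obtain ⟨q₁, hq₁⟩ := h₁ g
    obtain ⟨q₂, hq₂⟩ := h₂ g
    exact ⟨q₁ + q₂, by simp [hq₁, hq₂]⟩
  neg_mem' := by
    rintro f h g
    obtain ⟨q, hq⟩ := h g
    exact ⟨-q, by simp [hq]⟩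

/-!
Let `f = ∑ a_χ χ` be a rational-valued virtual character of a finite abelian group `G`. Raising
the roots of unity `χ g` to a power `k` prime to `|G|` is a Galois conjugation and fixes the values
of `f`, so by linear independence of characters `a_{χ ^ k} = a_χ`: the multiplicity `a_χ` depends
only on the subgroup generated by `χ`. Hence `f` is an integral combination of the sums
`∑_{⟨χ⟩ = Φ} χ` over the generators of subgroups `Φ` of the dual group. By Möbius inversion on the
subgroup lattice these are integral combinations of the sums `∑_{χ ∈ Φ} χ`, and duality identifies
the latter with the permutation characters of the subgroups of `G`.
-/

section Group

variable {X : Type*} [Group X]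

lemma exists_coprime_pow_eq_of_zpowers_eq {n : ℕ} [NeZero n] {x y : X} (hx : x ^ n = 1)
    (h : Subgroup.zpowers x = Subgroup.zpowers y) : ∃ k : ℕ, k.Coprime n ∧ x ^ k = y := by
  have hdvd : orderOf x ∣ n := orderOf_dvd_of_pow_eq_one hx
  have hfin : IsOfFinOrder x := isOfFinOrder_iff_pow_eq_one.2 ⟨n, NeZero.pos n, hx⟩
  obtain ⟨m, rfl⟩ : y ∈ Submonoid.powers x :=
    hfin.mem_powers_iff_mem_zpowers.2 (h ▸ Subgroup.mem_zpowers y)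
  have hm : m.Coprime (orderOf x) := mem_zpowers_pow_iff.1 (h ▸ Subgroup.mem_zpowers x)
  obtain ⟨u, hu⟩ := ZMod.unitsMap_surjective hdvd (ZMod.unitOfCoprime m hm)
  refine ⟨u.val.val, ZMod.val_coe_unit_coprime u, pow_eq_pow_iff_modEq.2 ?_⟩
  rw [← ZMod.natCast_eq_natCast_iff, ← ZMod.cast_eq_val, ← ZMod.unitsMap_val hdvd, hu,
    ZMod.coe_unitOfCoprime]

variable [Fintype X] {A : Type*} [AddCommGroup A] {S : AddSubgroup A} {F : X → A}

open Classical in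
lemma sum_zpowers_eq_mem_of_forall_sum_mem (hF : ∀ K : Subgroup X, ∑ x with x ∈ K, F x ∈ S)
    (K : Subgroup X) : ∑ x with Subgroup.zpowers x = K, F x ∈ S := by
  have := Fintype.ofFinite (Subgroup X)
  induction K using WellFoundedLT.induction with
  | ind K ih =>
    have hsplit : ∑ x with x ∈ K, F x
        = ∑ x with Subgroup.zpowers x = K, F x + ∑ x with Subgroup.zpowers x < K, F x := by
      simp_rw [← Subgroup.zpowers_le, le_iff_eq_or_lt (b := K), Finset.filter_or]
      exact Finset.sum_union (Finset.disjoint_filter.2 fun x _ h => h.not_lt)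
    have hlt : ∑ x with Subgroup.zpowers x < K, F x
        = ∑ L with L < K, ∑ x with Subgroup.zpowers x = L, F x := by
      rw [← Finset.sum_fiberwise_of_maps_to (t := {L | L < K}) (g := Subgroup.zpowers) (by simp)]
      refine Finset.sum_congr rfl fun L hL => ?_
      rw [Finset.filter_filter]
      congr! 2 with x
      exact and_iff_right_of_imp fun hx => hx ▸ (Finset.mem_filter.1 hL).2
    rw [eq_sub_of_add_eq hsplit.symm, hlt]
    exact sub_mem (hF K) (sum_mem fun L hL => ih L (Finset.mem_filter.1 hL).2)

open Classical in
lemma sum_zsmul_zpowers_mem_of_forall_sum_mem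
    (hF : ∀ K : Subgroup X, ∑ x with x ∈ K, F x ∈ S) (b : Subgroup X → ℤ) :
    ∑ x, b (Subgroup.zpowers x) • F x ∈ S := by
  have := Fintype.ofFinite (Subgroup X)
  rw [← Finset.sum_fiberwise _ Subgroup.zpowers]
  refine sum_mem fun K _ => ?_
  rw [Finset.sum_congr rfl fun x hx => by rw [(Finset.mem_filter.1 hx).2], ← Finset.smul_sum]
  exact zsmul_mem (sum_zpowers_eq_mem_of_forall_sum_mem hF K) _

end Group

open Polynomial in
lemma sum_mul_pow_eq_of_sum_mul_eq_ratCast {K : Type*} [Field K] [CharZero K] {n : ℕ} [NeZero n]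
    [HasEnoughRootsOfUnity K n] {ι : Type*} [Fintype ι] {c : ι → ℚ} {z : ι → K}
    (hz : ∀ i, z i ^ n = 1) {q : ℚ} (hq : ∑ i, (c i : K) * z i = q) {k : ℕ}
    (hk : k.Coprime n) : ∑ i, (c i : K) * z i ^ k = q := by
  obtain ⟨ζ, hζ⟩ := HasEnoughRootsOfUnity.exists_primitiveRoot K n
  choose e _ he using fun i => hζ.eq_pow_of_pow_eq_one (hz i)
  let P : ℚ[X] := ∑ i, C (c i) * X ^ e i - C q
  have aeval_P (j : ℕ) : aeval (ζ ^ j) P = ∑ i, (c i : K) * z i ^ j - q := by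
    simp [P, ← he, pow_right_comm ζ]
  have hmin : minpoly ℚ ζ = minpoly ℚ (ζ ^ k) := by
    rw [← cyclotomic_eq_minpoly_rat hζ (NeZero.pos n),
      ← cyclotomic_eq_minpoly_rat (hζ.pow_of_coprime k hk) (NeZero.pos n)]
  have hζP : aeval ζ P = 0 := by simpa [hq] using aeval_P 1
  have hζkP : aeval (ζ ^ k) P = 0 :=
    aeval_eq_zero_of_dvd_aeval_eq_zero (hmin ▸ minpoly.dvd ℚ ζ hζP) (minpoly.aeval ℚ _)
  rwa [aeval_P, sub_eq_zero] at hζkP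

section UnitCharacters

variable {G K : Type*} [MulOneClass G] [CommRing K] [IsDomain K]

lemma linearIndependent_int_monoidHom_units [CharZero K] :
    LinearIndependent ℤ fun (χ : G →* Kˣ) (g : G) => (χ g : K) := by
  have hinj : Function.Injective fun χ : G →* Kˣ => (Units.coeHom K).comp χ := fun χ ψ h => by
    ext g
    exact DFunLike.congr_fun h g
  exact ((linearIndependent_monoidHom G K).comp _ hinj).restrict_scalars' ℤ

open Classical in
lemma sum_mem_subgroup_apply [Fintype (G →* Kˣ)] (Φ : Subgroup (G →* Kˣ)) (g : G) :
    ∑ χ with χ ∈ Φ, (χ g : K) = if ∀ χ ∈ Φ, χ g = 1 then (Nat.card Φ : K) else 0 := by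
  let ev : Φ →* K := (Units.coeHom K).comp ((MonoidHom.eval g).comp Φ.subtype)
  have hev : ev = 1 ↔ ∀ χ ∈ Φ, χ g = 1 := by
    simp [ev, MonoidHom.ext_iff]
  rw [← if_congr hev rfl rfl, Nat.card_eq_fintype_card,
    Finset.sum_subtype (p := (· ∈ Φ)) _ (by simp)]
  exact_mod_cast sum_hom_units ev

end UnitCharacters

section PermChar

variable {G : Type*} [Group G]

open Classical in
lemma permChar_apply (H : Subgroup G) [H.Normal] (g : G) :
    permChar H g = if g ∈ H then (Nat.card (G ⧸ H) : ℂ) else 0 := by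
  have smul_eq_iff (x : G ⧸ H) : g • x = x ↔ g ∈ H := by
    rw [← QuotientGroup.eq_one_iff]
    induction x using QuotientGroup.induction_on with
    | H x => exact mul_eq_right (a := (g : G ⧸ H)) (b := x)
  unfold permChar
  split_ifs with h <;> simp [smul_eq_iff, h]

lemma EG_le_ratValued : EG G ≤ ratValued G := by
  rw [EG, AddSubgroup.closure_le]
  rintro _ ⟨H, rfl⟩ g
  exact ⟨(Nat.card {x : G ⧸ H // g • x = x} : ℚ), by simp [permChar]⟩

end PermChar

section FiniteAbelian

variable {G : Type*} [CommGroup G]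

lemma mem_RCa_iff_exists_sum [Fintype (G →* ℂˣ)] {f : G → ℂ} :
    f ∈ RCa G ↔ ∃ a : (G →* ℂˣ) → ℤ, ∑ χ, a χ • (fun g => (χ g : ℂ)) = f := by
  rw [← Submodule.mem_span_range_iff_exists_fun, ← Submodule.mem_toAddSubgroup,
    Submodule.span_int_eq_addSubgroupClosure, RCa]
  simp only [Set.range, eq_comm]

variable [Finite G]

open Classical in
lemma sum_subgroup_eq_permChar [Fintype (G →* ℂˣ)] (Φ : Subgroup (G →* ℂˣ)) :
    ∑ χ with χ ∈ Φ, (fun g => (χ g : ℂ))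
      = permChar ((CommGroup.subgroupOrderIsoSubgroupMonoidHom G ℂ).symm (.toDual Φ)) := by
  funext g
  rw [Finset.sum_apply, sum_mem_subgroup_apply, permChar_apply,
    ← CommGroup.card_subgroupOrderIsoSubgroupMonoidHom (M := ℂ)]
  simp

lemma permChar_mem_RCa (H : Subgroup G) : permChar H ∈ RCa G := by
  classical
  have := Fintype.ofFinite (G →* ℂˣ)
  let dual := CommGroup.subgroupOrderIsoSubgroupMonoidHom G ℂ
  rw [← dual.symm_apply_apply H, ← OrderDual.toDual_ofDual (dual H), ← sum_subgroup_eq_permChar]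
  exact sum_mem fun χ _ => AddSubgroup.subset_closure ⟨χ, rfl⟩

lemma coeff_pow_eq_of_mem_ratValued [Fintype (G →* ℂˣ)] {a : (G →* ℂˣ) → ℤ}
    (hf : ∑ χ, a χ • (fun g => (χ g : ℂ)) ∈ ratValued G) {k : ℕ} (hk : k.Coprime (Nat.card G))
    (χ : G →* ℂˣ) : a (χ ^ k) = a χ := by
  have hcard : (Nat.card (G →* ℂˣ)).Coprime k := by
    rw [CommGroup.card_monoidHom_of_hasEnoughRootsOfUnity]
    exact hk.symm
  let pow := powCoprime hcard
  have hgalois : ∑ χ, a χ • (fun g => (pow χ g : ℂ)) = ∑ χ, a χ • (fun g => (χ g : ℂ)) := by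
    funext g
    obtain ⟨q, hq⟩ := hf g
    have hroot (χ : G →* ℂˣ) : (χ g : ℂ) ^ Nat.card G = 1 := by
      rw [← Units.val_pow_eq_pow_val, ← map_pow, pow_card_eq_one', map_one, Units.val_one]
    rw [hq]
    simp only [Finset.sum_apply, zsmul_eq_mul] at hq ⊢
    exact_mod_cast sum_mul_pow_eq_of_sum_mul_eq_ratCast (c := fun χ => a χ) hroot
      (by exact_mod_cast hq) hk
  have hreindex : ∑ χ, a (pow χ) • (fun g => (pow χ g : ℂ)) = ∑ χ, a χ • (fun g => (pow χ g : ℂ)) :=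
    (pow.sum_comp fun χ => a χ • (fun g => (χ g : ℂ))).trans hgalois.symm
  exact Fintype.linearIndependent_iffₛ.1
    (linearIndependent_int_monoidHom_units.comp pow pow.injective) _ _ hreindex χ

lemma coeff_factorsThrough_zpowers [Fintype (G →* ℂˣ)] {a : (G →* ℂˣ) → ℤ}
    (hf : ∑ χ, a χ • (fun g => (χ g : ℂ)) ∈ ratValued G) :
    a.FactorsThrough Subgroup.zpowers := by
  intro χ ψ h
  have hχ : χ ^ Nat.card G = 1 := by
    rw [← CommGroup.card_monoidHom_of_hasEnoughRootsOfUnity G ℂ]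
    exact pow_card_eq_one' (x := χ)
  obtain ⟨k, hk, rfl⟩ := exists_coprime_pow_eq_of_zpowers_eq hχ h
  exact (coeff_pow_eq_of_mem_ratValued hf hk χ).symm

end FiniteAbelian

theorem EG_cyclic_eq_rational_virtual_characters_general {G : Type*} [CommGroup G] [Finite G] :
    EG G = RCa G ⊓ ratValued G := by
  classical
  have := Fintype.ofFinite (G →* ℂˣ)
  refine le_antisymm (le_inf ?_ EG_le_ratValued) ?_
  · rw [EG, AddSubgroup.closure_le]
    rintro _ ⟨H, rfl⟩
    exact permChar_mem_RCa H
  · rintro f ⟨hf, hrat⟩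
    obtain ⟨a, rfl⟩ := mem_RCa_iff_exists_sum.1 hf
    obtain ⟨b, rfl⟩ := (Function.factorsThrough_iff a).1 (coeff_factorsThrough_zpowers hrat)
    refine sum_zsmul_zpowers_mem_of_forall_sum_mem (fun Φ => ?_) b
    rw [sum_subgroup_eq_permChar]
    exact AddSubgroup.subset_closure ⟨_, rfl⟩

/-- For the cyclic group `C_n`, every virtual complex character with
rational (equivalently integral) values is a `ℤ`-linear combination of the characters
induced from the trivial character of subgroups; that is,
`⟨Ind^{C_n}_H ρ₀ ∣ H ≤ C_n⟩ = R_ℚ C_n`. -/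
theorem EG_cyclic_eq_rational_virtual_characters (n : ℕ) [NeZero n] :
    EG (Multiplicative (ZMod n))
      = RCa (Multiplicative (ZMod n)) ⊓ ratValued (Multiplicative (ZMod n)) :=
  EG_cyclic_eq_rational_virtual_characters_general
end

section
/- Let $C_n=\langle x\rangle$ be cyclic of order $n$ and $C_l=\langle y\rangle\le C_n$ a subgroup of order $l$ (so $l\mid n$ and $y=x^{n/l}$). Then the square formed by $\theta$ and restriction commutes: for every $\alpha\in\mathbb{B}_{C_n}$ one has $\theta(\mathbb{B}res^{C_n}_{C_l}(\alpha))=\widetilde{Res}^{C_n}_{C_l}(\theta(\alpha))$ in $\widetilde{R_{\mathbb{C}}C_l}$. -/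
open Finsupp

/-- The natural map from conjugacy classes of `G` to the abelianization of `G`. -/
def conjToAb {G : Type*} [Group G] : ConjClasses G → Abelianization G :=
  Quotient.lift Abelianization.of (fun a b (h : IsConj a b) => by
    obtain ⟨c, hc⟩ := h
    have : Abelianization.of (c * a) = Abelianization.of (b * c) := by
      rw [hc.eq]
    simpa [map_mul, mul_comm] using this)

@[simp] lemma conjToAb_mk {G : Type*} [Group G] (a : G) :
    conjToAb (ConjClasses.mk a) = Abelianization.of a := rfl

/-- The degree map sending a formal `ℤ`-combination of conjugacy classes to the corresponding
product in the abelianization. -/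
noncomputable def degMap (G : Type*) [Group G] :
    (ConjClasses G →₀ ℤ) →+ Additive (Abelianization G) :=
  Finsupp.liftAddHom (fun c => (zmultiplesHom _) (Additive.ofMul (conjToAb c)))

@[simp] lemma degMap_single {G : Type*} [Group G] (a : G) (k : ℤ) :
    degMap G (Finsupp.single (ConjClasses.mk a) k)
      = k • (Additive.ofMul (Abelianization.of a)) := by
  simp [degMap]

/-- `lambdaKer G` consists of the formal `ℤ`-combinations of conjugacy classes whose product
lies in the commutator subgroup; these are the (differences of) singular orbit data. -/
noncomputable def lambdaKer (G : Type*) [Group G] : AddSubgroup (ConjClasses G →₀ ℤ) :=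
  (degMap G).ker

/-- The subgroup of relations: the class of the identity, and the cancelling pairs
`[γ̂, γ̂⁻¹]`. -/
noncomputable def bRel (G : Type*) [Group G] : AddSubgroup (ConjClasses G →₀ ℤ) :=
  AddSubgroup.closure
    (insert (Finsupp.single (ConjClasses.mk (1 : G)) 1)
      {x | ∃ γ : G, x = Finsupp.single (ConjClasses.mk γ) 1
        + Finsupp.single (ConjClasses.mk γ⁻¹) 1})

/-- The group of singular orbit data `𝔹_G`. -/
abbrev BG (G : Type*) [Group G] :=
  (lambdaKer G) ⧸ ((bRel G).addSubgroupOf (lambdaKer G))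

/-- The formal sum of conjugacy classes corresponding to a finite (multi)set of group
elements, presented as a list. -/
noncomputable def bdatum (G : Type*) [Group G] (l : List G) : ConjClasses G →₀ ℤ :=
  (l.map (fun γ => Finsupp.single (ConjClasses.mk γ) (1 : ℤ))).sum

lemma degMap_bdatum {G : Type*} [Group G] (l : List G) :
    degMap G (bdatum G l) = Additive.ofMul (Abelianization.of l.prod) := by
  induction l with
  | nil => simp [bdatum]
  | cons a t ih =>
      have : bdatum G (a :: t) = Finsupp.single (ConjClasses.mk a) 1 + bdatum G t := by
        simp [bdatum]
      rw [this, map_add, ih, degMap_single]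
      simp [← ofMul_mul]

lemma bdatum_mem_lambdaKer {G : Type*} [Group G] (l : List G)
    (h : l.prod ∈ commutator G) : bdatum G l ∈ lambdaKer G := by
  have : Abelianization.of l.prod = 1 := (QuotientGroup.eq_one_iff _).2 h
  simp [lambdaKer, AddMonoidHom.mem_ker, degMap_bdatum, this]

lemma bdatum_mem_lambdaKer_of_prod_eq_one {G : Type*} [Group G] (l : List G)
    (h : l.prod = 1) : bdatum G l ∈ lambdaKer G :=
  bdatum_mem_lambdaKer l (by simp [h, Subgroup.one_mem])

/-- The element of `𝔹_G` determined by a list of group elements whose product lies in the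
commutator subgroup. -/
noncomputable def bmk {G : Type*} [Group G] (l : List G) (h : bdatum G l ∈ lambdaKer G) :
    BG G :=
  QuotientAddGroup.mk (⟨bdatum G l, h⟩ : lambdaKer G)

/-! ### The homomorphism `θ` for cyclic groups. -/

/-- The cyclic group of order `n`, written multiplicatively. -/
abbrev Cyc (n : ℕ) := Multiplicative (ZMod n)

/-- The irreducible character `ρ_j` of the cyclic group `C_n`,
`ρ_j(x^v) = e^{2πi j v / n}`. -/
noncomputable def rho (n : ℕ) (j : ℕ) : Cyc n → ℂ :=
  fun g => Complex.exp (2 * (Real.pi : ℂ) * Complex.I * j * ((Multiplicative.toAdd g).val : ℂ) / n)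

/-- For `i, j`, with `k = gcd(n, i)` and `i = l k`, the unique integer `r` with
`1 ≤ r ≤ n/k` and `r ≡ j l (mod n/k)`. -/
def rVal (n i j : ℕ) : ℕ :=
  if (j * (i / n.gcd i)) % (n / n.gcd i) = 0 then n / n.gcd i
  else (j * (i / n.gcd i)) % (n / n.gcd i)

/-- The virtual character `∑_{j=1}^{n-1} (q - (1/n) ∑_s k_s r_{sj}) ρ_j` associated to the
singular orbit data given by the list `L = [x^{i_1}, …, x^{i_q}]`. -/
noncomputable def thetaFun (n : ℕ) (L : List (Cyc n)) : Cyc n → ℂ :=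
  ∑ j ∈ Finset.Ico 1 n,
    ((L.length : ℂ)
        - (L.map (fun γ => ((n.gcd (Multiplicative.toAdd γ).val
            * rVal n (Multiplicative.toAdd γ).val j : ℕ) : ℂ))).sum / n)
      • rho n j

/-- `θ : 𝔹_{C_n} → R_ℂ C_n / D_{C_n}` is the homomorphism sending the class of a
singular orbit datum `[x^{i_1}, …, x^{i_q}]` to the class of the virtual character
`∑_{j=1}^{n-1} (q - (1/n) ∑_s k_s r_{sj}) ρ_j`. -/
def IsTheta {n : ℕ} (θ : BG (Cyc n) →+ RTilde (Cyc n)) : Prop :=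
  ∀ (L : List (Cyc n)) (hL : bdatum (Cyc n) L ∈ lambdaKer (Cyc n)) (r : RCa (Cyc n)),
    (r : Cyc n → ℂ) = thetaFun n L →
      θ (bmk L hL) = QuotientAddGroup.mk r

/-- The inclusion `C_l → C_n` (for `l ∣ n`) sending the generator `y` of `C_l` to
`x^(n/l)`. -/
noncomputable def cycIncl (n l : ℕ) (hl : l ∣ n) : Cyc l →* Cyc n :=
  AddMonoidHom.toMultiplicative
    (ZMod.lift l ⟨(zmultiplesHom (ZMod n)) ((n / l : ℕ) : ZMod n), by
      simp only [zmultiplesHom_apply]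
      rw [zsmul_eq_mul]
      push_cast
      rw [← Nat.cast_mul, Nat.mul_div_cancel' hl, ZMod.natCast_self]⟩)

/-- The minimal exponent `m ≥ 1` such that `γ^m` lies in the subgroup `C_l ≤ C_n`. -/
noncomputable def resExp (n l : ℕ) (hl : l ∣ n) (γ : Cyc n) : ℕ :=
  sInf {m : ℕ | 1 ≤ m ∧ γ ^ m ∈ (cycIncl n l hl).range}

/-- The restriction to `C_l` of the singular orbit of `γ` in `C_n`: it consists of
`i = (n/l)/n_γ` orbits with stabilizer generated by the element of `C_l` mapping to
`γ^{n_γ}`, where `n_γ = min {m ≥ 1 : γ^m ∈ C_l}`. -/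
noncomputable def bresSingle (n l : ℕ) (hl : l ∣ n) (γ : Cyc n) :
    ConjClasses (Cyc l) →₀ ℤ :=
  Finsupp.single
    (ConjClasses.mk (Multiplicative.ofAdd
      (((Multiplicative.toAdd (γ ^ resExp n l hl γ)).val / (n / l) : ℕ) : ZMod l)))
    (((n / l) / resExp n l hl γ : ℕ) : ℤ)

/-- `res` is the restriction homomorphism `𝔹res^{C_n}_{C_l} : 𝔹_{C_n} → 𝔹_{C_l}`. -/
def IsBresCyc (n l : ℕ) (hl : l ∣ n) (res : BG (Cyc n) →+ BG (Cyc l)) : Prop :=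
  ∀ (L : List (Cyc n)) (hL : bdatum (Cyc n) L ∈ lambdaKer (Cyc n))
    (m : lambdaKer (Cyc l)),
    (m : ConjClasses (Cyc l) →₀ ℤ) = (L.map (fun γ => bresSingle n l hl γ)).sum →
      res (bmk L hL) = QuotientAddGroup.mk m

/-- `R` is the homomorphism `R_ℂ C_n / D_{C_n} → R_ℂ C_l / D_{C_l}` induced by
restriction of characters along the inclusion `C_l → C_n`. -/
def IsResQ (n l : ℕ) (hl : l ∣ n) (R : RTilde (Cyc n) →+ RTilde (Cyc l)) : Prop :=
  ∀ (r : RCa (Cyc n)) (r' : RCa (Cyc l)),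
    (r' : Cyc l → ℂ) = (fun y => (r : Cyc n → ℂ) (cycIncl n l hl y)) →
      R (QuotientAddGroup.mk r) = QuotientAddGroup.mk r'

/-!
For `γ = x^i` the coefficient of `ρ_j` in `θ[γ]` is the fractional part `{-ij/n}`. Restricting to
`C_l` identifies `ρ_j` with `ρ_{j + lt}`, so the coefficient of `ρ_j` in the restriction is
`∑_{t < n/l} {-ij/n - it/(n/l)}`. With `d = gcd(n/l, i)`, Hermite's identity evaluates this sum as
`d {-(i/d)j/l} + (n/l - d)/2`. The first term is the coefficient in `θ` of the `d` orbits
`y^(i/d)` into which `[γ]` falls. The second one does not depend on `j`, so the two sides of the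
square differ by a multiple of the regular character of `C_l`, which is induced from the trivial
subgroup. The multiple is integral, as comparing the coefficients of `ρ_0` shows.
-/

section ResidueSums

variable {A : Type*} [AddCommMonoid A]

lemma sum_range_mul (f : ℕ → A) (l N : ℕ) :
    ∑ j ∈ Finset.range (l * N), f j
      = ∑ j ∈ Finset.range l, ∑ t ∈ Finset.range N, f (j + l * t) := by
  rw [Finset.sum_comm]
  induction N with
  | zero => simp
  | succ N ih =>
    rw [Nat.mul_succ, Finset.sum_range_add, ih, Finset.sum_range_succ]
    simp only [add_comm]

lemma sum_range_of_dvd (f : ℕ → A) {l n : ℕ} (hl : l ∣ n) :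
    ∑ j ∈ Finset.range n, f j
      = ∑ j ∈ Finset.range l, ∑ t ∈ Finset.range (n / l), f (j + l * t) := by
  rw [← sum_range_mul, Nat.mul_div_cancel' hl]

lemma sum_range_mul_of_periodic {f : ℕ → A} {M : ℕ} (hf : Function.Periodic f M) (d : ℕ) :
    ∑ t ∈ Finset.range (M * d), f t = d • ∑ t ∈ Finset.range M, f t := by
  have hterm (t k : ℕ) : f (t + M * k) = f t := by
    rw [mul_comm]
    exact hf.nat_mul k t
  simp only [sum_range_mul, hterm, Finset.sum_const, Finset.card_range, Finset.smul_sum]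

lemma sum_zmod_eq_sum_range (n : ℕ) [NeZero n] (f : ZMod n → A) :
    ∑ x, f x = ∑ j ∈ Finset.range n, f (j : ZMod n) := by
  refine Finset.sum_nbij' ZMod.val (fun j => (j : ZMod n)) ?_ ?_ ?_ ?_ ?_
  · simp [ZMod.val_lt]
  · simp
  · simp
  · intro j hj
    exact ZMod.val_cast_of_lt (Finset.mem_range.1 hj)
  · simp

lemma sum_range_add_mul_emod {M : ℕ} [NeZero M] {a : ℤ} (ha : IsCoprime a M) (b : ℤ) :
    ∑ t ∈ Finset.range M, (b + a * t) % (M : ℤ) = ∑ t ∈ Finset.range M, (t : ℤ) := by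
  obtain ⟨u, hu⟩ := (ZMod.coe_int_isUnit_iff_isCoprime a M).2 ha.symm
  let affine : ZMod M ≃ ZMod M := u.mulLeft.trans (Equiv.addLeft (b : ZMod M))
  calc ∑ t ∈ Finset.range M, (b + a * t) % (M : ℤ)
      = ∑ x : ZMod M, ((affine x).val : ℤ) := by
        rw [sum_zmod_eq_sum_range]
        refine Finset.sum_congr rfl fun t _ => ?_
        rw [← ZMod.val_intCast]
        simp [affine, hu]
    _ = ∑ x : ZMod M, (x.val : ℤ) := affine.sum_comp fun x => (x.val : ℤ)
    _ = ∑ t ∈ Finset.range M, (t : ℤ) := by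
        rw [sum_zmod_eq_sum_range]
        refine Finset.sum_congr rfl fun t ht => ?_
        rw [ZMod.val_cast_of_lt (Finset.mem_range.1 ht)]

end ResidueSums

section Hermite

variable {K : Type*} [Field K] [LinearOrder K] [IsStrictOrderedRing K] [FloorRing K]

lemma fract_div_natCast (x : K) (M : ℕ) [NeZero M] :
    Int.fract (x / M) = (Int.fract x + (⌊x⌋ % M : ℤ)) / M := by
  have hM : (M : K) ≠ 0 := NeZero.ne _
  rw [Int.fract, Int.floor_div_natCast, Int.fract, Int.emod_def]
  push_cast
  field_simp
  ring

/-- Hermite's identity; the classical case is `c = 1`. -/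
lemma sum_range_fract_add_mul_div_of_isCoprime {M : ℕ} [NeZero M] {c : ℤ} (hc : IsCoprime c M)
    (y : K) :
    ∑ t ∈ Finset.range M, Int.fract ((y + c * t) / M) = Int.fract y + ((M : K) - 1) / 2 := by
  have hM : (M : K) ≠ 0 := NeZero.ne _
  have hterm (t : ℕ) : Int.fract ((y + c * t) / M)
      = (Int.fract y + ((⌊y⌋ + c * t) % M : ℤ)) / M := by
    have hcast : (c : K) * t = ((c * t : ℤ) : K) := by push_cast; rfl
    rw [fract_div_natCast, hcast, Int.fract_add_intCast, Int.floor_add_intCast]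
  have hid : (∑ t ∈ Finset.range M, (t : K)) * 2 = M * (M - 1) := by
    have h := congrArg (Nat.cast (R := K)) (Finset.sum_range_id_mul_two M)
    push_cast [NeZero.one_le (n := M)] at h
    exact h
  have hres := congrArg (Int.cast (R := K)) (sum_range_add_mul_emod hc ⌊y⌋)
  rw [Int.cast_sum, Int.cast_sum] at hres
  simp only [Int.cast_natCast] at hres
  simp only [hterm]
  rw [← Finset.sum_div, Finset.sum_add_distrib, hres, Finset.sum_const, Finset.card_range,
    nsmul_eq_mul]
  field_simp
  linear_combination hid

lemma sum_range_fract_add_mul_div (N : ℕ) [NeZero N] (c : ℤ) (y : K) :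
    ∑ t ∈ Finset.range N, Int.fract ((y + c * t) / N)
      = Int.gcd N c * Int.fract (y / Int.gcd N c) + ((N : K) - Int.gcd N c) / 2 := by
  have hd : 0 < Int.gcd N c := Int.gcd_pos_of_ne_zero_left _ (by exact_mod_cast NeZero.ne N)
  have hcop := Int.isCoprime_iff_gcd_eq_one.2 (Int.gcd_div_gcd_div_gcd hd)
  obtain ⟨M, hM⟩ : Int.gcd N c ∣ N := by exact_mod_cast Int.gcd_dvd_left (N : ℤ) c
  obtain ⟨e, he⟩ := Int.gcd_dvd_right (N : ℤ) c
  generalize Int.gcd N c = d at *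
  subst hM he
  have hd0 : (d : K) ≠ 0 := by exact_mod_cast hd.ne'
  have hdZ : (d : ℤ) ≠ 0 := by exact_mod_cast hd.ne'
  have : NeZero M := ⟨fun h => NeZero.ne (d * M) (by rw [h, mul_zero])⟩
  have hM0 : (M : K) ≠ 0 := NeZero.ne _
  rw [Nat.cast_mul, Int.mul_ediv_cancel_left _ hdZ, Int.mul_ediv_cancel_left _ hdZ] at hcop
  have hterm (t : ℕ) : Int.fract ((y + (d * e : ℤ) * t) / (d * M : ℕ))
      = Int.fract ((y / d + e * t) / M) := by
    congr 1
    push_cast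
    field_simp
  have hper : Function.Periodic (fun t : ℕ => Int.fract ((y / d + e * t) / M)) M := fun t => by
    refine Int.fract_eq_fract.2 ⟨e, ?_⟩
    push_cast
    field_simp
    ring
  simp only [hterm]
  rw [mul_comm d M, sum_range_mul_of_periodic hper,
    sum_range_fract_add_mul_div_of_isCoprime hcop.symm, nsmul_eq_mul]
  push_cast
  ring

end Hermite

section OrbitData

variable {G : Type*} [Group G]

lemma bdatum_append (L L' : List G) : bdatum G (L ++ L') = bdatum G L + bdatum G L' := by
  simp [bdatum]

lemma bdatum_replicate (m : ℕ) (γ : G) :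
    bdatum G (List.replicate m γ) = single (ConjClasses.mk γ) (m : ℤ) := by
  simp [bdatum]

lemma bRel_le_lambdaKer : bRel G ≤ lambdaKer G := by
  rw [bRel, AddSubgroup.closure_le]
  rintro _ (rfl | ⟨γ, rfl⟩) <;> simp [lambdaKer, AddMonoidHom.mem_ker]

lemma exists_bdatum_sub_mem_bRel (f : ConjClasses G →₀ ℤ) :
    ∃ L : List G, bdatum G L - f ∈ bRel G := by
  induction f using Finsupp.induction_linear with
  | zero => exact ⟨[], by simp [bdatum]⟩
  | add f g hf hg =>
    obtain ⟨L, hL⟩ := hf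
    obtain ⟨L', hL'⟩ := hg
    refine ⟨L ++ L', ?_⟩
    rw [bdatum_append, add_sub_add_comm]
    exact add_mem hL hL'
  | single c k =>
    obtain ⟨γ, rfl⟩ := ConjClasses.mk_surjective c
    obtain ⟨m, rfl | rfl⟩ := k.eq_nat_or_neg
    · exact ⟨List.replicate m γ, by simp [bdatum_replicate]⟩
    · have hcancel : bdatum G (List.replicate m γ⁻¹) - single (ConjClasses.mk γ) (-(m : ℤ))
          = m • (single (ConjClasses.mk γ) 1 + single (ConjClasses.mk γ⁻¹) 1) := by
        simp [bdatum_replicate, add_comm]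
      refine ⟨List.replicate m γ⁻¹, hcancel ▸ nsmul_mem ?_ m⟩
      exact AddSubgroup.subset_closure (Set.mem_insert_of_mem _ ⟨γ, rfl⟩)

lemma exists_eq_bmk (α : BG G) : ∃ L hL, α = bmk (G := G) L hL := by
  obtain ⟨f, rfl⟩ := QuotientAddGroup.mk_surjective α
  obtain ⟨L, hL⟩ := exists_bdatum_sub_mem_bRel (f : ConjClasses G →₀ ℤ)
  have hmem : bdatum G L ∈ lambdaKer G := by
    simpa using add_mem (bRel_le_lambdaKer hL) f.2
  refine ⟨L, hmem, QuotientAddGroup.eq.2 ?_⟩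
  rw [AddSubgroup.mem_addSubgroupOf]
  simpa [neg_add_eq_sub] using hL

lemma bdatum_mem_lambdaKer_iff_prod_eq_one {G : Type*} [CommGroup G] {L : List G} :
    bdatum G L ∈ lambdaKer G ↔ L.prod = 1 := by
  rw [lambdaKer, AddMonoidHom.mem_ker, degMap_bdatum, ofMul_eq_zero]
  exact map_eq_one_iff Abelianization.of Abelianization.equivOfComm.injective

end OrbitData

section PermutationCharacter

variable {G : Type*} [Group G]

lemma permChar_mem_EG (H : Subgroup G) : permChar H ∈ EG G :=
  AddSubgroup.subset_closure ⟨H, rfl⟩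

lemma permChar_bot_one : permChar (⊥ : Subgroup G) 1 = Nat.card G := by
  rw [permChar, Nat.card_congr (Equiv.subtypeUnivEquiv fun x => one_smul G x),
    Nat.card_congr (QuotientGroup.quotientBot (G := G)).toEquiv]

lemma permChar_bot_of_ne_one {g : G} (hg : g ≠ 1) : permChar (⊥ : Subgroup G) g = 0 := by
  rw [permChar, Nat.cast_eq_zero, Nat.card_eq_zero]
  refine Or.inl ⟨fun ⟨x, hx⟩ => hg ?_⟩
  induction x using QuotientGroup.induction_on with | H x => ?_
  have hfix : ((g * x : G) : G ⧸ (⊥ : Subgroup G)) = x := hx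
  rwa [QuotientGroup.eq, Subgroup.mem_bot, inv_mul_eq_one, mul_eq_right] at hfix

end PermutationCharacter

section CyclicCharacters

lemma rho_eq_stdAddChar (n : ℕ) [NeZero n] (j : ℕ) (g : Cyc n) :
    rho n j g = ZMod.stdAddChar ((j : ZMod n) * g.toAdd) := by
  have hcast : (j : ZMod n) * g.toAdd = ((j * g.toAdd.val : ℤ) : ZMod n) := by simp
  rw [hcast, ZMod.stdAddChar_coe, rho]
  push_cast
  ring_nf

lemma rho_ofAdd_intCast (n : ℕ) [NeZero n] (j : ℕ) (k : ℤ) :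
    rho n j (Multiplicative.ofAdd (k : ZMod n))
      = Complex.exp (2 * Real.pi * Complex.I * (j * k : ℤ) / n) := by
  rw [rho_eq_stdAddChar, ← ZMod.stdAddChar_coe]
  simp

lemma rho_add_mul (l : ℕ) [NeZero l] (j t : ℕ) : rho l (j + l * t) = rho l j := by
  funext g
  simp [rho_eq_stdAddChar]

lemma rho_mem_RCa (n : ℕ) [NeZero n] (j : ℕ) : rho n j ∈ RCa (Cyc n) := by
  let χ : AddChar (ZMod n) ℂ := ZMod.stdAddChar.mulShift (j : ZMod n)
  refine AddSubgroup.subset_closure ⟨MonoidHom.toHomUnits χ.toMonoidHom, ?_⟩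
  funext g
  simp [χ, rho_eq_stdAddChar, AddChar.mulShift_apply]

lemma permChar_bot_eq_sum_rho (l : ℕ) [NeZero l] :
    permChar (⊥ : Subgroup (Cyc l)) = ∑ j ∈ Finset.range l, rho l j := by
  funext g
  rw [Finset.sum_apply]
  simp only [rho_eq_stdAddChar]
  rw [← sum_zmod_eq_sum_range l fun x => ZMod.stdAddChar (x * g.toAdd),
    AddChar.sum_mulShift _ (ZMod.isPrimitive_stdAddChar l)]
  rcases eq_or_ne g 1 with rfl | hg
  · simp [permChar_bot_one]
  · rw [permChar_bot_of_ne_one hg, if_neg (mt toAdd_eq_zero.1 hg), Nat.cast_zero]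

lemma permChar_bot_mem_RCa (l : ℕ) [NeZero l] : permChar (⊥ : Subgroup (Cyc l)) ∈ RCa (Cyc l) :=
  permChar_bot_eq_sum_rho l ▸ sum_mem fun j _ => rho_mem_RCa l j

lemma cycIncl_ofAdd_intCast {n l : ℕ} (hl : l ∣ n) (k : ℤ) :
    cycIncl n l hl (Multiplicative.ofAdd (k : ZMod l))
      = Multiplicative.ofAdd ((k * (n / l : ℕ) : ℤ) : ZMod n) := by
  rw [cycIncl, AddMonoidHom.toMultiplicative_apply_apply, toAdd_ofAdd, ZMod.lift_coe, Int.cast_mul,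
    Int.cast_natCast, ← zsmul_eq_mul]
  rfl

lemma rho_cycIncl {n l : ℕ} [NeZero n] (hl : l ∣ n) (j : ℕ) (y : Cyc l) :
    rho n j (cycIncl n l hl y) = rho l j y := by
  have : NeZero l := ⟨ne_zero_of_dvd_ne_zero (NeZero.ne n) hl⟩
  obtain ⟨k, rfl⟩ : ∃ k : ℤ, Multiplicative.ofAdd (k : ZMod l) = y :=
    ZMod.intCast_surjective y.toAdd
  obtain ⟨N, rfl⟩ := hl
  have hl0 : (l : ℂ) ≠ 0 := NeZero.ne _
  have hN0 : (N : ℂ) ≠ 0 := by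
    exact_mod_cast right_ne_zero_of_mul (NeZero.ne (l * N))
  rw [cycIncl_ofAdd_intCast, rho_ofAdd_intCast, rho_ofAdd_intCast,
    Nat.mul_div_cancel_left _ (Nat.pos_of_neZero l)]
  push_cast
  congr 1
  field_simp

end CyclicCharacters

section Theta

lemma prod_eq_one_iff_dvd_sum_val {n : ℕ} [NeZero n] {L : List (Cyc n)} :
    L.prod = 1 ↔ n ∣ (L.map fun γ => γ.toAdd.val).sum := by
  rw [← ZMod.natCast_eq_zero_iff, ← toAdd_eq_zero, toAdd_list_sum]
  simp [Function.comp_def]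

lemma rVal_pos {n i : ℕ} (hn : 0 < n / n.gcd i) (j : ℕ) : 0 < rVal n i j := by
  unfold rVal
  split_ifs <;> omega

lemma rVal_le {n i : ℕ} (hn : 0 < n / n.gcd i) (j : ℕ) : rVal n i j ≤ n / n.gcd i := by
  unfold rVal
  split_ifs
  exacts [le_rfl, (Nat.mod_lt _ hn).le]

lemma rVal_modEq (n i j : ℕ) : rVal n i j ≡ j * (i / n.gcd i) [MOD n / n.gcd i] := by
  unfold rVal
  split_ifs with h
  · rw [Nat.ModEq, h, Nat.mod_self]
  · exact Nat.mod_modEq _ _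

lemma one_sub_gcd_mul_rVal_div (n i j : ℕ) [NeZero n] :
    1 - ((n.gcd i * rVal n i j : ℕ) : ℚ) / n = Int.fract (-((i : ℚ) * j) / n) := by
  have hk : 0 < n.gcd i := Nat.gcd_pos_of_pos_left i (Nat.pos_of_neZero n)
  have hn' : 0 < n / n.gcd i := Nat.div_pos (Nat.gcd_le_left _ (Nat.pos_of_neZero n)) hk
  have hpos : (0 : ℚ) < rVal n i j := by exact_mod_cast rVal_pos hn' j
  have hle : (rVal n i j : ℚ) ≤ (n / n.gcd i : ℕ) := by exact_mod_cast rVal_le hn' j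
  obtain ⟨z, hz⟩ := (rVal_modEq n i j).dvd
  have hn : (n : ℚ) = n.gcd i * (n / n.gcd i : ℕ) := by
    exact_mod_cast (Nat.mul_div_cancel' (Nat.gcd_dvd_left n i)).symm
  have hi : (i : ℚ) = n.gcd i * (i / n.gcd i : ℕ) := by
    exact_mod_cast (Nat.mul_div_cancel' (Nat.gcd_dvd_right n i)).symm
  generalize rVal n i j = r, n.gcd i = k, n / n.gcd i = n', i / n.gcd i = i' at *
  have hk0 : (k : ℚ) ≠ 0 := by exact_mod_cast hk.ne'
  have hn0 : (0 : ℚ) < n' := by exact_mod_cast hn'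
  have hz' : (j : ℚ) * i' - r = n' * z := by exact_mod_cast hz
  symm
  rw [hn, hi, Nat.cast_mul, mul_div_mul_left _ _ hk0, Int.fract_eq_iff]
  refine ⟨sub_nonneg.2 ((div_le_one hn0).2 hle), sub_lt_self _ (div_pos hpos hn0), -z - 1, ?_⟩
  push_cast
  field_simp
  linear_combination -hz'

/-- The contribution `1 - k r_j / n` of a single orbit `[γ]`, `γ = x^i`, to the coefficient of
`ρ_j` in `thetaFun`, in the closed form `{-ij / n}`. -/
def orbitCoeff (n : ℕ) (γ : Cyc n) (j : ℕ) : ℚ :=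
  Int.fract (-((γ.toAdd.val : ℚ) * j) / n)

/-- The coefficient of `ρ_j` in `thetaFun n L`. At `j = 0`, which `thetaFun` leaves out, it
vanishes. -/
def thetaCoeff (n : ℕ) (L : List (Cyc n)) (j : ℕ) : ℚ :=
  (L.map fun γ => orbitCoeff n γ j).sum

lemma orbitCoeff_ofAdd_natCast (n : ℕ) [NeZero n] (i j : ℕ) :
    orbitCoeff n (Multiplicative.ofAdd (i : ZMod n)) j = Int.fract (-((i : ℚ) * j) / n) := by
  have hn : (n : ℚ) ≠ 0 := NeZero.ne _
  have hi : ((i % n : ℕ) : ℚ) + n * (i / n : ℕ) = i := by exact_mod_cast Nat.mod_add_div i n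
  rw [orbitCoeff, toAdd_ofAdd, ZMod.val_natCast, Int.fract_eq_fract]
  refine ⟨(i / n * j : ℕ), ?_⟩
  rw [Int.cast_natCast, ← hi]
  push_cast
  field_simp
  ring

lemma thetaCoeff_zero (n : ℕ) (L : List (Cyc n)) : thetaCoeff n L 0 = 0 := by
  simp [thetaCoeff, orbitCoeff]

lemma thetaCoeff_cons (n : ℕ) (γ : Cyc n) (L : List (Cyc n)) (j : ℕ) :
    thetaCoeff n (γ :: L) j = orbitCoeff n γ j + thetaCoeff n L j :=
  List.sum_cons

lemma length_sub_sum_rVal_div (n : ℕ) [NeZero n] (L : List (Cyc n)) (j : ℕ) :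
    (L.length : ℂ) - (L.map fun γ => ((n.gcd γ.toAdd.val * rVal n γ.toAdd.val j : ℕ) : ℂ)).sum / n
      = (thetaCoeff n L j : ℂ) := by
  induction L with
  | nil => simp [thetaCoeff]
  | cons γ L ih =>
    rw [thetaCoeff_cons, orbitCoeff, ← one_sub_gcd_mul_rVal_div, List.map_cons, List.sum_cons,
      List.length_cons]
    push_cast at ih ⊢
    rw [← ih]
    ring

lemma thetaFun_eq_sum_range (n : ℕ) [NeZero n] (L : List (Cyc n)) :
    thetaFun n L = ∑ j ∈ Finset.range n, (thetaCoeff n L j : ℂ) • rho n j := by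
  rw [Finset.range_eq_Ico, Finset.sum_eq_sum_Ico_succ_bot (Nat.pos_of_neZero n), thetaCoeff_zero,
    Rat.cast_zero, zero_smul, zero_add, thetaFun]
  simp only [length_sub_sum_rVal_div, zero_add]

lemma exists_thetaCoeff_add_eq_intCast {n : ℕ} (L : List (Cyc n)) (j : ℕ) :
    ∃ z : ℤ, thetaCoeff n L j + ((L.map fun γ => γ.toAdd.val).sum : ℕ) * j / n = z := by
  induction L with
  | nil => exact ⟨0, by simp [thetaCoeff]⟩
  | cons γ L ih =>
    obtain ⟨z, hz⟩ := ih
    refine ⟨z - ⌊-((γ.toAdd.val : ℚ) * j) / n⌋, ?_⟩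
    rw [thetaCoeff_cons, orbitCoeff, Int.fract, List.map_cons, List.sum_cons, Int.cast_sub, ← hz]
    push_cast
    ring

lemma exists_thetaCoeff_eq_intCast {n : ℕ} [NeZero n] {L : List (Cyc n)} (hL : L.prod = 1)
    (j : ℕ) : ∃ z : ℤ, thetaCoeff n L j = z := by
  obtain ⟨z, hz⟩ := exists_thetaCoeff_add_eq_intCast L j
  obtain ⟨w, hw⟩ := prod_eq_one_iff_dvd_sum_val.1 hL
  have hn : (n : ℚ) ≠ 0 := NeZero.ne _
  refine ⟨z - w * j, ?_⟩
  rw [hw] at hz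
  push_cast at hz ⊢
  rw [← hz]
  field_simp
  ring

lemma thetaFun_mem_RCa {n : ℕ} [NeZero n] {L : List (Cyc n)} (hL : L.prod = 1) :
    thetaFun n L ∈ RCa (Cyc n) := by
  rw [thetaFun_eq_sum_range]
  refine sum_mem fun j _ => ?_
  obtain ⟨z, hz⟩ := exists_thetaCoeff_eq_intCast hL j
  rw [hz, Rat.cast_intCast, Int.cast_smul_eq_zsmul]
  exact zsmul_mem (rho_mem_RCa n j) z

end Theta

section Restriction

variable {n l : ℕ}

lemma neZero_div_of_dvd [NeZero n] (hl : l ∣ n) : NeZero (n / l) :=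
  ⟨(Nat.div_ne_zero_iff_of_dvd hl).2 ⟨NeZero.ne n, ne_zero_of_dvd_ne_zero (NeZero.ne n) hl⟩⟩

lemma ofAdd_intCast_mem_range_cycIncl_iff (hl : l ∣ n) (a : ℤ) :
    Multiplicative.ofAdd (a : ZMod n) ∈ (cycIncl n l hl).range ↔ ((n / l : ℕ) : ℤ) ∣ a := by
  have hN : ((n / l : ℕ) : ℤ) ∣ n := by exact_mod_cast Nat.div_dvd_of_dvd hl
  constructor
  · rintro ⟨y, hy⟩
    obtain ⟨k, rfl⟩ : ∃ k : ℤ, Multiplicative.ofAdd (k : ZMod l) = y :=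
      ZMod.intCast_surjective y.toAdd
    rw [cycIncl_ofAdd_intCast, Multiplicative.ofAdd.injective.eq_iff,
      ZMod.intCast_eq_intCast_iff_dvd_sub] at hy
    exact (dvd_sub_left (Dvd.intro_left k rfl)).1 (hN.trans hy)
  · rintro ⟨k, rfl⟩
    exact ⟨Multiplicative.ofAdd (k : ZMod l), by rw [cycIncl_ofAdd_intCast, mul_comm]⟩

lemma pow_mem_range_cycIncl_iff [NeZero n] (hl : l ∣ n) (γ : Cyc n) (m : ℕ) :
    γ ^ m ∈ (cycIncl n l hl).range ↔ addOrderOf (γ.toAdd.val : ZMod (n / l)) ∣ m := by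
  have hpow : γ ^ m = Multiplicative.ofAdd (((m * γ.toAdd.val : ℕ) : ℤ) : ZMod n) := by
    apply Multiplicative.toAdd.injective
    simp
  rw [hpow, ofAdd_intCast_mem_range_cycIncl_iff, Int.natCast_dvd_natCast,
    addOrderOf_dvd_iff_nsmul_eq_zero, nsmul_eq_mul, ← Nat.cast_mul, ZMod.natCast_eq_zero_iff]

lemma resExp_eq [NeZero n] (hl : l ∣ n) (γ : Cyc n) :
    resExp n l hl γ = n / l / (n / l).gcd γ.toAdd.val := by
  have := neZero_div_of_dvd hl
  rw [← ZMod.addOrderOf_coe _ (NeZero.ne (n / l)), resExp]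
  simp only [pow_mem_range_cycIncl_iff]
  exact IsLeast.csInf_eq ⟨⟨addOrderOf_pos _, dvd_rfl⟩, fun m hm => Nat.le_of_dvd hm.1 hm.2⟩

/-- The element of `C_l` mapping to `γ ^ n_γ`, which generates the stabilizer of each orbit of the
restriction of `γ` to `C_l`: for `γ = x^i` it is `y^(i / gcd(n/l, i))`. -/
def resElt (n l : ℕ) (γ : Cyc n) : Cyc l :=
  Multiplicative.ofAdd ((γ.toAdd.val / (n / l).gcd γ.toAdd.val : ℕ) : ZMod l)

lemma bresSingle_eq [NeZero n] (hl : l ∣ n) (γ : Cyc n) :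
    bresSingle n l hl γ
      = single (ConjClasses.mk (resElt n l γ)) ((n / l).gcd γ.toAdd.val : ℤ) := by
  have hN : 0 < n / l := (neZero_div_of_dvd hl).pos
  have hpow : (γ ^ resExp n l hl γ).toAdd
      = ((n / l * (γ.toAdd.val / (n / l).gcd γ.toAdd.val) : ℕ) : ZMod n) := by
    rw [← Nat.mul_div_assoc _ (Nat.gcd_dvd_right _ _),
      ← Nat.div_mul_right_comm (Nat.gcd_dvd_left _ _), ← resExp_eq hl]
    simp
  have hmod (a : ℕ) : n / l * a % n = n / l * (a % l) := by
    have h := Nat.mul_mod_mul_left (n / l) a l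
    rwa [Nat.div_mul_cancel hl] at h
  rw [bresSingle, hpow, resExp_eq, Nat.div_div_self (Nat.gcd_dvd_left _ _) hN.ne', resElt,
    ZMod.val_natCast, hmod, Nat.mul_div_cancel_left _ hN, ZMod.natCast_mod]

/-- The restriction of a singular orbit datum from `C_n` to `C_l`, as a list: an orbit `[γ]` with
`γ = x^i` falls into `gcd(n/l, i)` orbits. -/
def resList (n l : ℕ) (L : List (Cyc n)) : List (Cyc l) :=
  L.flatMap fun γ => List.replicate ((n / l).gcd γ.toAdd.val) (resElt n l γ)

lemma resList_cons (γ : Cyc n) (L : List (Cyc n)) :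
    resList n l (γ :: L)
      = List.replicate ((n / l).gcd γ.toAdd.val) (resElt n l γ) ++ resList n l L :=
  List.flatMap_cons

lemma bdatum_resList [NeZero n] (hl : l ∣ n) (L : List (Cyc n)) :
    bdatum (Cyc l) (resList n l L) = (L.map fun γ => bresSingle n l hl γ).sum := by
  induction L with
  | nil => simp [bdatum, resList]
  | cons γ L ih =>
    rw [resList_cons, bdatum_append, bdatum_replicate, ih, List.map_cons, List.sum_cons,
      bresSingle_eq]

lemma toAdd_prod_resList (L : List (Cyc n)) :
    (resList n l L).prod.toAdd = (((L.map fun γ => γ.toAdd.val).sum : ℕ) : ZMod l) := by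
  induction L with
  | nil => simp [resList]
  | cons γ L ih =>
    rw [resList_cons, List.prod_append, List.prod_replicate, toAdd_mul, toAdd_pow, ih, resElt,
      toAdd_ofAdd, nsmul_eq_mul, ← Nat.cast_mul, Nat.mul_div_cancel' (Nat.gcd_dvd_right _ _),
      List.map_cons, List.sum_cons, Nat.cast_add]

lemma prod_resList_eq_one [NeZero n] (hl : l ∣ n) {L : List (Cyc n)} (hL : L.prod = 1) :
    (resList n l L).prod = 1 := by
  rw [← toAdd_eq_zero, toAdd_prod_resList, ZMod.natCast_eq_zero_iff]
  exact hl.trans (prod_eq_one_iff_dvd_sum_val.1 hL)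

/-- The multiplicity of the regular character of `C_l` in the difference between the restriction
of `thetaFun n L` and `thetaFun l (resList n l L)`. -/
def resDefect (n l : ℕ) (L : List (Cyc n)) : ℚ :=
  (L.map fun γ => (((n / l : ℕ) : ℚ) - (n / l).gcd γ.toAdd.val) / 2).sum

lemma sum_orbitCoeff_add_mul [NeZero n] (hl : l ∣ n) (γ : Cyc n) (j : ℕ) :
    ∑ t ∈ Finset.range (n / l), orbitCoeff n γ (j + l * t)
      = (n / l).gcd γ.toAdd.val * orbitCoeff l (resElt n l γ) j
        + (((n / l : ℕ) : ℚ) - (n / l).gcd γ.toAdd.val) / 2 := by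
  have := neZero_div_of_dvd hl
  have : NeZero l := ⟨ne_zero_of_dvd_ne_zero (NeZero.ne n) hl⟩
  have hl0 : (l : ℚ) ≠ 0 := NeZero.ne _
  have hN0 : ((n / l : ℕ) : ℚ) ≠ 0 := NeZero.ne _
  have hn : (n : ℚ) = l * (n / l : ℕ) := by exact_mod_cast (Nat.mul_div_cancel' hl).symm
  have hterm (t : ℕ) : orbitCoeff n γ (j + l * t)
      = Int.fract ((-((γ.toAdd.val : ℚ) * j) / l + (-γ.toAdd.val : ℤ) * t) / (n / l : ℕ)) := by
    rw [orbitCoeff, hn]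
    congr 1
    push_cast
    field_simp
    ring
  have hquot : -((γ.toAdd.val : ℚ) * j) / l / (n / l).gcd γ.toAdd.val
      = -((γ.toAdd.val / (n / l).gcd γ.toAdd.val : ℕ) * j) / l := by
    rw [Nat.cast_div_charZero (Nat.gcd_dvd_right _ _)]
    ring
  simp only [hterm]
  rw [sum_range_fract_add_mul_div, Int.gcd_neg, Int.gcd_natCast_natCast, hquot,
    resElt, orbitCoeff_ofAdd_natCast]

lemma thetaCoeff_resList_cons (γ : Cyc n) (L : List (Cyc n)) (j : ℕ) :
    thetaCoeff l (resList n l (γ :: L)) j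
      = (n / l).gcd γ.toAdd.val * orbitCoeff l (resElt n l γ) j
        + thetaCoeff l (resList n l L) j := by
  simp [thetaCoeff, resList_cons]

lemma sum_thetaCoeff_add_mul [NeZero n] (hl : l ∣ n) (L : List (Cyc n)) (j : ℕ) :
    ∑ t ∈ Finset.range (n / l), thetaCoeff n L (j + l * t)
      = thetaCoeff l (resList n l L) j + resDefect n l L := by
  induction L with
  | nil => simp [thetaCoeff, resDefect, resList]
  | cons γ L ih =>
    simp only [thetaCoeff_cons]
    rw [Finset.sum_add_distrib, ih, sum_orbitCoeff_add_mul hl, thetaCoeff_resList_cons, resDefect,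
      resDefect, List.map_cons, List.sum_cons]
    ring

lemma exists_resDefect_eq_intCast [NeZero n] (hl : l ∣ n) {L : List (Cyc n)} (hL : L.prod = 1) :
    ∃ c : ℤ, resDefect n l L = c := by
  choose z hz using exists_thetaCoeff_eq_intCast hL
  -- The coefficient of `ρ_0` on the `C_l` side is zero, so the defect is a sum of integers.
  have h := sum_thetaCoeff_add_mul hl L 0
  rw [thetaCoeff_zero, zero_add] at h
  refine ⟨∑ t ∈ Finset.range (n / l), z (0 + l * t), ?_⟩
  rw [← h, Int.cast_sum]
  exact Finset.sum_congr rfl fun t _ => hz _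

lemma thetaFun_comp_cycIncl [NeZero n] (hl : l ∣ n) (L : List (Cyc n)) :
    thetaFun n L ∘ cycIncl n l hl
      = thetaFun l (resList n l L) + (resDefect n l L : ℂ) • permChar (⊥ : Subgroup (Cyc l)) := by
  have : NeZero l := ⟨ne_zero_of_dvd_ne_zero (NeZero.ne n) hl⟩
  funext y
  calc thetaFun n L (cycIncl n l hl y)
      = ∑ j ∈ Finset.range n, (thetaCoeff n L j : ℂ) * rho l j y := by
        simp only [thetaFun_eq_sum_range, Finset.sum_apply, Pi.smul_apply, smul_eq_mul,
          rho_cycIncl]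
    _ = ∑ j ∈ Finset.range l,
          ((∑ t ∈ Finset.range (n / l), thetaCoeff n L (j + l * t) : ℚ) : ℂ) * rho l j y := by
        simp only [sum_range_of_dvd _ hl, rho_add_mul, Rat.cast_sum, Finset.sum_mul]
    _ = (thetaFun l (resList n l L)
          + (resDefect n l L : ℂ) • permChar (⊥ : Subgroup (Cyc l))) y := by
        simp only [sum_thetaCoeff_add_mul hl, thetaFun_eq_sum_range, permChar_bot_eq_sum_rho,
          Rat.cast_add, add_mul, Finset.sum_add_distrib, Pi.add_apply, Pi.smul_apply,
          Finset.sum_apply, smul_eq_mul, Finset.mul_sum]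

end Restriction

/-- For `C_l ≤ C_n`, the square formed by `θ` and restriction commutes:
`θ ∘ 𝔹res^{C_n}_{C_l} = Res^{C_n}_{C_l} ∘ θ`. -/
theorem theta_commutes_with_restriction (n l : ℕ) [NeZero n] [NeZero l] (hl : l ∣ n)
    (θn : BG (Cyc n) →+ RTilde (Cyc n)) (hθn : IsTheta θn)
    (θl : BG (Cyc l) →+ RTilde (Cyc l)) (hθl : IsTheta θl)
    (res : BG (Cyc n) →+ BG (Cyc l)) (hres : IsBresCyc n l hl res)
    (R : RTilde (Cyc n) →+ RTilde (Cyc l)) (hR : IsResQ n l hl R) :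
    ∀ α : BG (Cyc n), θl (res α) = R (θn α) := by
  intro α
  obtain ⟨L, hL, rfl⟩ := exists_eq_bmk α
  have hprod : L.prod = 1 := bdatum_mem_lambdaKer_iff_prod_eq_one.1 hL
  have hprod' : (resList n l L).prod = 1 := prod_resList_eq_one hl hprod
  have hL' := bdatum_mem_lambdaKer_iff_prod_eq_one.2 hprod'
  have hθ' := thetaFun_mem_RCa hprod'
  obtain ⟨c, hc⟩ := exists_resDefect_eq_intCast hl hprod
  have hrestrict : thetaFun l (resList n l L) + c • permChar ⊥
      = fun y => thetaFun n L (cycIncl n l hl y) := by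
    rw [← Int.cast_smul_eq_zsmul ℂ, ← Rat.cast_intCast, ← hc]
    exact (thetaFun_comp_cycIncl hl L).symm
  have hres_theta : θl (res (bmk L hL)) = QuotientAddGroup.mk ⟨_, hθ'⟩ := by
    rw [hres L hL ⟨_, hL'⟩ (bdatum_resList hl L)]
    exact hθl _ hL' _ rfl
  rw [hres_theta, hθn L hL ⟨_, thetaFun_mem_RCa hprod⟩ rfl,
    hR _ ⟨_, add_mem hθ' (zsmul_mem (permChar_bot_mem_RCa l) c)⟩ hrestrict, QuotientAddGroup.eq,
    AddSubgroup.mem_addSubgroupOf]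
  simpa using zsmul_mem (permChar_mem_EG (⊥ : Subgroup (Cyc l))) c
end

section
/- Let $p$ be an odd prime, $G=\mathbb{Z}/p\mathbb{Z}\times\mathbb{Z}/p\mathbb{Z}$, and let $G_0,\ldots,G_p$ be the $p+1$ distinct subgroups of $G$ of order $p$, with inclusions $i_j:G_j\to G$. Then the subgroup of $\mathbb{B}_G$ generated by the images $\mathbb{B}_{i_j}(\mathbb{B}_{G_j})$, $j=0,\ldots,p$, has index $p^{p-1}$ in $\mathbb{B}_G$. -/
open Finsupp

/-- The additive map on formal sums of conjugacy classes induced by a group homomorphism. -/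
noncomputable def ccFinsuppMap {H G : Type*} [Group H] [Group G] (f : H →* G) :
    (ConjClasses H →₀ ℤ) →+ (ConjClasses G →₀ ℤ) :=
  Finsupp.mapDomain.addMonoidHom (ConjClasses.map f)

@[simp] lemma ccFinsuppMap_single {H G : Type*} [Group H] [Group G] (f : H →* G)
    (a : H) (k : ℤ) :
    ccFinsuppMap f (Finsupp.single (ConjClasses.mk a) k)
      = Finsupp.single (ConjClasses.mk (f a)) k := by
  simp [ccFinsuppMap, Finsupp.mapDomain_single]
  rfl

lemma degMap_ccFinsuppMap {H G : Type*} [Group H] [Group G] (f : H →* G)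
    (x : ConjClasses H →₀ ℤ) :
    degMap G (ccFinsuppMap f x)
      = MonoidHom.toAdditive (Abelianization.map f) (degMap H x) := by
  have : (degMap G).comp (ccFinsuppMap f)
      = (MonoidHom.toAdditive (Abelianization.map f)).comp (degMap H) := by
    apply Finsupp.addHom_ext
    intro c k
    obtain ⟨a, rfl⟩ := ConjClasses.mk_surjective c
    simp
  exact DFunLike.congr_fun this x

lemma ccFinsuppMap_mem_lambdaKer {H G : Type*} [Group H] [Group G] (f : H →* G)
    {x : ConjClasses H →₀ ℤ} (hx : x ∈ lambdaKer H) :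
    ccFinsuppMap f x ∈ lambdaKer G := by
  have hx' : degMap H x = 0 := hx
  simp [lambdaKer, AddMonoidHom.mem_ker, degMap_ccFinsuppMap, hx']

lemma ccFinsuppMap_bRel_le {H G : Type*} [Group H] [Group G] (f : H →* G) :
    (bRel H).map (ccFinsuppMap f) ≤ bRel G := by
  rw [bRel, AddMonoidHom.map_closure, AddSubgroup.closure_le]
  rintro _ ⟨y, hy, rfl⟩
  rcases hy with h1 | ⟨γ, rfl⟩
  · subst h1
    apply AddSubgroup.subset_closure
    left
    simp
  · apply AddSubgroup.subset_closure
    right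
    exact ⟨f γ, by simp⟩

/-- The functorial homomorphism `𝔹_f : 𝔹_H → 𝔹_G` induced by a group homomorphism
`f : H → G`. -/
noncomputable def BMap {H G : Type*} [Group H] [Group G] (f : H →* G) : BG H →+ BG G :=
  QuotientAddGroup.map _ _
    (((ccFinsuppMap f).comp (lambdaKer H).subtype).codRestrict (lambdaKer G)
      (fun x => ccFinsuppMap_mem_lambdaKer f x.2))
    (by
      intro x hx
      rw [AddSubgroup.mem_addSubgroupOf] at hx
      rw [AddSubgroup.mem_comap, AddSubgroup.mem_addSubgroupOf]
      exact ccFinsuppMap_bRel_le f (AddSubgroup.mem_map_of_mem _ hx))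

/-!
Suppose a finite abelian group `G` is the union of subgroups `H j` meeting pairwise trivially.
Modulo the relations, every formal sum `x` is the sum of its restrictions `x|_{H j}` to the
subgroups, and sending `x` to the degrees of the `x|_{H j}` is a surjection onto `∏ H j` whose
kernel is exactly the set of formal sums representing elements generated by the `𝔹_{H j}`. That
kernel thus has index `∏ |H j|`, while the formal sums of degree zero have index `|G|`, so the index
in `𝔹_G` is `∏ |H j| / |G|`. For `q + 1` subgroups of order `q` in a group of order `q²` this is
`q ^ (q + 1) / q ^ 2`.
-/

namespace SingularOrbitData

section GeneratedSubgroup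

lemma degMap_surjective (G : Type*) [Group G] : Function.Surjective (degMap G) := by
  intro t
  obtain ⟨a, ha⟩ := QuotientGroup.mk_surjective t.toMul
  exact ⟨Finsupp.single (ConjClasses.mk a) 1,
    by rw [degMap_single, one_zsmul]; exact congrArg _ ha⟩

lemma index_lambdaKer (G : Type*) [Group G] :
    (lambdaKer G).index = Nat.card (Abelianization G) := by
  rw [lambdaKer, AddSubgroup.index_ker,
    AddMonoidHom.range_eq_top_of_surjective _ (degMap_surjective G), AddSubgroup.card_top]
  rfl

lemma bRel_le_lambdaKer (G : Type*) [Group G] : bRel G ≤ lambdaKer G := by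
  rw [bRel, AddSubgroup.closure_le]
  rintro _ (rfl | ⟨a, rfl⟩) <;> simp [lambdaKer, AddMonoidHom.mem_ker]

lemma single_one_mem_bRel (G : Type*) [Group G] (k : ℤ) :
    Finsupp.single (ConjClasses.mk (1 : G)) k ∈ bRel G := by
  have h : Finsupp.single (ConjClasses.mk (1 : G)) (1 : ℤ) ∈ bRel G :=
    AddSubgroup.subset_closure (Set.mem_insert _ _)
  simpa using (bRel G).zsmul_mem h k

/-- The homomorphism between the groups of formal sums of degree zero induced by a group
homomorphism. It descends to `𝔹_f` modulo the relations. -/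
noncomputable def lambdaMap {H G : Type*} [Group H] [Group G] (f : H →* G) :
    lambdaKer H →+ lambdaKer G :=
  ((ccFinsuppMap f).comp (lambdaKer H).subtype).codRestrict (lambdaKer G)
    fun x => ccFinsuppMap_mem_lambdaKer f x.2

lemma map_subtype_range_lambdaMap {H G : Type*} [Group H] [Group G] (f : H →* G) :
    (lambdaMap f).range.map (lambdaKer G).subtype = (lambdaKer H).map (ccFinsuppMap f) := by
  rw [AddMonoidHom.map_range]
  change ((ccFinsuppMap f).comp (lambdaKer H).subtype).range = _
  rw [← AddMonoidHom.map_range, AddSubgroup.range_subtype]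

lemma range_BMap {H G : Type*} [Group H] [Group G] (f : H →* G) :
    (BMap f).range = (lambdaMap f).range.map (QuotientAddGroup.mk' _) := by
  rw [AddMonoidHom.map_range]
  ext x
  exact QuotientAddGroup.mk_surjective.exists

variable {G : Type*} [Group G] {ι : Type*} {H : ι → Type*} [∀ j, Group (H j)]

/-- The formal sums of conjugacy classes of `G` that are, modulo the relations, sums of images under
the `f j` of formal sums of degree zero. It is the preimage in `ConjClasses G →₀ ℤ` of the subgroup
of `𝔹_G` generated by the images of the `𝔹_{f j}`. -/
noncomputable def generatedLattice (f : ∀ j, H j →* G) : AddSubgroup (ConjClasses G →₀ ℤ) :=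
  (⨆ j, (lambdaKer (H j)).map (ccFinsuppMap (f j))) ⊔ bRel G

lemma generatedLattice_le_lambdaKer (f : ∀ j, H j →* G) : generatedLattice f ≤ lambdaKer G := by
  refine sup_le (iSup_le fun j => ?_) (bRel_le_lambdaKer G)
  rintro _ ⟨y, hy, rfl⟩
  exact ccFinsuppMap_mem_lambdaKer (f j) hy

lemma comap_mk_iSup_range_BMap (f : ∀ j, H j →* G) :
    (⨆ j, (BMap (f j)).range).comap (QuotientAddGroup.mk' _)
      = (generatedLattice f).addSubgroupOf (lambdaKer G) := by
  apply AddSubgroup.map_injective (lambdaKer G).subtype_injective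
  simp_rw [range_BMap, ← AddSubgroup.map_iSup]
  rw [AddSubgroup.comap_map_eq, QuotientAddGroup.ker_mk', AddSubgroup.map_sup,
    AddSubgroup.map_iSup, AddSubgroup.addSubgroupOf_map_subtype,
    AddSubgroup.addSubgroupOf_map_subtype, inf_eq_left.2 (bRel_le_lambdaKer G),
    inf_eq_left.2 (generatedLattice_le_lambdaKer f), generatedLattice]
  simp_rw [map_subtype_range_lambdaMap]

lemma index_iSup_range_BMap_mul_card_abelianization (f : ∀ j, H j →* G) :
    (⨆ j, (BMap (f j)).range).index * Nat.card (Abelianization G)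
      = (generatedLattice f).index := by
  rw [← AddSubgroup.index_comap_of_surjective _ (QuotientAddGroup.mk'_surjective _),
    comap_mk_iSup_range_BMap, ← index_lambdaKer]
  exact AddSubgroup.relIndex_mul_index (generatedLattice_le_lambdaKer f)

end GeneratedSubgroup

section Restriction

variable {G : Type*} [CommGroup G]

lemma conjClasses_map_subtype_injective (H : Subgroup G) :
    Function.Injective (ConjClasses.map H.subtype) := by
  refine ConjClasses.mk_surjective.forall₂.2 fun a b h => ?_
  exact congrArg _ (H.subtype_injective (ConjClasses.mk_injective h))

/-- The restriction of formal sums of elements of `G` to the subgroup `H`, discarding the elements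
outside `H`. -/
noncomputable def restrict (H : Subgroup G) : (ConjClasses G →₀ ℤ) →+ (ConjClasses H →₀ ℤ) :=
  Finsupp.comapDomain.addMonoidHom (conjClasses_map_subtype_injective H)

lemma restrict_ccFinsuppMap (H : Subgroup G) (y : ConjClasses H →₀ ℤ) :
    restrict H (ccFinsuppMap H.subtype y) = y :=
  Finsupp.comapDomain_mapDomain _ (conjClasses_map_subtype_injective H) y

lemma restrict_single_of_mem {H : Subgroup G} {a : G} (ha : a ∈ H) (k : ℤ) :
    restrict H (Finsupp.single (ConjClasses.mk a) k)
      = Finsupp.single (ConjClasses.mk (⟨a, ha⟩ : H)) k := by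
  rw [← restrict_ccFinsuppMap H (Finsupp.single _ k), ccFinsuppMap_single]
  rfl

lemma restrict_single_of_notMem {H : Subgroup G} {a : G} (ha : a ∉ H) (k : ℤ) :
    restrict H (Finsupp.single (ConjClasses.mk a) k) = 0 := by
  suffices ConjClasses.mk a ∉ Set.range (ConjClasses.map H.subtype) from
    Finsupp.comapDomain_single_of_not_mem_range this k
      (conjClasses_map_subtype_injective H).injOn
  rintro ⟨c, hc⟩
  obtain ⟨b, rfl⟩ := ConjClasses.mk_surjective c
  exact ha (ConjClasses.mk_injective hc ▸ b.2)

lemma degMap_restrict_of_mem_bRel (H : Subgroup G) {x : ConjClasses G →₀ ℤ} (hx : x ∈ bRel G) :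
    degMap H (restrict H x) = 0 := by
  suffices bRel G ≤ ((degMap H).comp (restrict H)).ker from this hx
  rw [bRel, AddSubgroup.closure_le]
  rintro _ (rfl | ⟨a, rfl⟩)
  · have h1 : (⟨1, H.one_mem⟩ : H) = 1 := rfl
    simp [AddMonoidHom.mem_ker, restrict_single_of_mem H.one_mem, h1]
  · by_cases ha : a ∈ H
    · have hinv : (⟨a⁻¹, H.inv_mem ha⟩ : H) = ⟨a, ha⟩⁻¹ := rfl
      simp [AddMonoidHom.mem_ker, restrict_single_of_mem ha,
        restrict_single_of_mem (H.inv_mem ha), hinv]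
    · have ha' : a⁻¹ ∉ H := by simpa using ha
      simp [AddMonoidHom.mem_ker, restrict_single_of_notMem ha, restrict_single_of_notMem ha']

lemma degMap_restrict_ccFinsuppMap_of_disjoint {H K : Subgroup G} (hd : Disjoint H K)
    (y : ConjClasses K →₀ ℤ) :
    degMap H (restrict H (ccFinsuppMap K.subtype y)) = 0 := by
  suffices ((degMap H).comp (restrict H)).comp (ccFinsuppMap K.subtype) = 0 from
    DFunLike.congr_fun this y
  apply Finsupp.addHom_ext
  intro c k
  obtain ⟨a, rfl⟩ := ConjClasses.mk_surjective c
  by_cases ha : (a : G) ∈ H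
  · have h1 : (⟨a, ha⟩ : H) = 1 := Subtype.ext (Subgroup.disjoint_def.1 hd ha a.2)
    simp [restrict_single_of_mem ha, h1]
  · simp [restrict_single_of_notMem ha]

end Restriction

lemma card_abelianization_of_comm (G : Type*) [CommGroup G] :
    Nat.card (Abelianization G) = Nat.card G :=
  Nat.card_congr Abelianization.equivOfComm.toEquiv.symm

section Partition

variable {G : Type*} [CommGroup G] {ι : Type*} {H : ι → Subgroup G}

/-- The degrees of the restrictions of a formal sum to each member of a family of subgroups. -/
noncomputable def degrees (H : ι → Subgroup G) :
    (ConjClasses G →₀ ℤ) →+ ∀ j, Additive (Abelianization (H j)) :=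
  AddMonoidHom.pi fun j => (degMap (H j)).comp (restrict (H j))

lemma degrees_ccFinsuppMap [DecidableEq ι] (hd : Pairwise fun i j => Disjoint (H i) (H j)) (j : ι)
    (y : ConjClasses (H j) →₀ ℤ) :
    degrees H (ccFinsuppMap (H j).subtype y) = Pi.single j (degMap (H j) y) := by
  ext1 k
  by_cases hk : k = j
  · subst hk
    simp [degrees, restrict_ccFinsuppMap]
  · simp [degrees, Pi.single_eq_of_ne hk, degMap_restrict_ccFinsuppMap_of_disjoint (hd hk)]

lemma generatedLattice_le_ker_degrees (hd : Pairwise fun i j => Disjoint (H i) (H j)) :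
    generatedLattice (fun j => (H j).subtype) ≤ (degrees H).ker := by
  classical
  refine sup_le (iSup_le fun j => ?_) fun x hx => funext fun j => degMap_restrict_of_mem_bRel _ hx
  rintro _ ⟨y, hy, rfl⟩
  have hy : degMap (H j) y = 0 := hy
  rw [AddMonoidHom.mem_ker, degrees_ccFinsuppMap hd, hy, Pi.single_zero]

lemma degrees_surjective [Finite ι] (hd : Pairwise fun i j => Disjoint (H i) (H j)) :
    Function.Surjective (degrees H) := by
  classical
  have := Fintype.ofFinite ι
  intro t
  choose y hy using fun j => degMap_surjective (H j) (t j)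
  refine ⟨∑ j, ccFinsuppMap (H j).subtype (y j), ?_⟩
  simp only [map_sum, degrees_ccFinsuppMap hd, hy, Finset.univ_sum_single]

lemma sub_sum_restrict_mem_bRel [Fintype ι] (hd : Pairwise fun i j => Disjoint (H i) (H j))
    (hcov : ∀ a ≠ 1, ∃ j, a ∈ H j) (x : ConjClasses G →₀ ℤ) :
    x - ∑ j, ccFinsuppMap (H j).subtype (restrict (H j) x) ∈ bRel G := by
  induction x using Finsupp.induction_linear with
  | zero => simp
  | add x y hx hy =>
    simpa only [map_add, Finset.sum_add_distrib, add_sub_add_comm] using (bRel G).add_mem hx hy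
  | single c k =>
    obtain ⟨a, rfl⟩ := ConjClasses.mk_surjective c
    by_cases ha : a = 1
    · subst ha
      refine (bRel G).sub_mem (single_one_mem_bRel G k) ((bRel G).sum_mem fun j _ => ?_)
      simpa [restrict_single_of_mem (H j).one_mem] using single_one_mem_bRel G k
    · obtain ⟨j, hj⟩ := hcov a ha
      have restrict_eq_zero (i : ι) (hij : i ≠ j) :
          restrict (H i) (Finsupp.single (ConjClasses.mk a) k) = 0 :=
        restrict_single_of_notMem (fun hi => ha (Subgroup.disjoint_def.1 (hd hij) hi hj)) k
      rw [Fintype.sum_eq_single j fun i hij => by rw [restrict_eq_zero i hij, map_zero]]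
      simp [restrict_single_of_mem hj]

lemma generatedLattice_eq_ker_degrees [Finite ι]
    (hd : Pairwise fun i j => Disjoint (H i) (H j)) (hcov : ∀ a ≠ 1, ∃ j, a ∈ H j) :
    generatedLattice (fun j => (H j).subtype) = (degrees H).ker := by
  refine (generatedLattice_le_ker_degrees hd).antisymm fun x hx => ?_
  have := Fintype.ofFinite ι
  have hmem (j : ι) : restrict (H j) x ∈ lambdaKer (H j) := congrFun hx j
  rw [← add_sub_cancel (∑ j, ccFinsuppMap (H j).subtype (restrict (H j) x)) x]
  exact AddSubgroup.add_mem_sup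
    (AddSubgroup.sum_mem _ fun j _ => AddSubgroup.mem_iSup_of_mem j ⟨_, hmem j, rfl⟩)
    (sub_sum_restrict_mem_bRel hd hcov x)

lemma index_iSup_range_BMap_mul_card [Fintype ι]
    (hd : Pairwise fun i j => Disjoint (H i) (H j))
    (hcov : ∀ a ≠ 1, ∃ j, a ∈ H j) :
    (⨆ j, (BMap (H j).subtype).range).index * Nat.card G = ∏ j, Nat.card (H j) := by
  calc (⨆ j, (BMap (H j).subtype).range).index * Nat.card G
      = (degrees H).ker.index := by
        rw [← card_abelianization_of_comm G, index_iSup_range_BMap_mul_card_abelianization,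
          generatedLattice_eq_ker_degrees hd hcov]
    _ = ∏ j, Nat.card (Additive (Abelianization (H j))) := by
        rw [AddSubgroup.index_ker,
          AddMonoidHom.range_eq_top_of_surjective _ (degrees_surjective hd),
          AddSubgroup.card_top, Nat.card_pi]
    _ = ∏ j, Nat.card (H j) :=
        Finset.prod_congr rfl fun j _ => card_abelianization_of_comm (H j)

end Partition

section Counting

variable {G : Type*} [Group G]

lemma disjoint_of_card_eq_prime {p : ℕ} (hp : p.Prime) {H K : Subgroup G}
    (hH : Nat.card H = p) (hK : Nat.card K = p) (hne : H ≠ K) : Disjoint H K := by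
  have : Fact (Nat.card K).Prime := ⟨hK ▸ hp⟩
  have : Finite H := Nat.finite_of_card_ne_zero (hH ▸ hp.ne_zero)
  rcases (H.subgroupOf K).eq_bot_or_eq_top_of_prime_card with h | h
  · exact Subgroup.subgroupOf_eq_bot.1 h
  · exact absurd (Subgroup.eq_of_le_of_card_ge (Subgroup.subgroupOf_eq_top.1 h)
      (hH.trans hK.symm).le).symm hne

lemma exists_mem_of_sum_card_sub_one [Finite G] {ι : Type*} [Fintype ι] {H : ι → Subgroup G}
    (hd : Pairwise fun i j => Disjoint (H i) (H j))
    (hsum : ∑ j, (Nat.card (H j) - 1) = Nat.card G - 1) (a : G) (ha : a ≠ 1) : ∃ j, a ∈ H j := by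
  have hdiff : Pairwise (Function.onFun Disjoint fun j => (H j : Set G) \ {1}) := fun i j hij =>
    Set.disjoint_left.2 fun x hi hj => hi.2 (Subgroup.disjoint_def.1 (hd hij) hi.1 hj.1)
  have hcard : (⋃ j, (H j : Set G) \ {1}).ncard = ({1}ᶜ : Set G).ncard := by
    rw [Set.ncard_iUnion_of_finite (fun _ => Set.toFinite _) hdiff, finsum_eq_sum_of_fintype,
      Set.ncard_compl, Set.ncard_singleton, ← hsum]
    refine Finset.sum_congr rfl fun j _ => ?_
    rw [Set.ncard_sdiff_singleton_of_mem (H j).one_mem]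
    rfl
  have hunion : ⋃ j, (H j : Set G) \ {1} = {1}ᶜ :=
    Set.eq_of_subset_of_ncard_le (Set.iUnion_subset fun j x hx => hx.2) hcard.ge
  obtain ⟨j, hj⟩ := Set.mem_iUnion.1 (hunion.ge ha)
  exact ⟨j, hj.1⟩

end Counting

end SingularOrbitData

theorem index_of_subgroup_generated_by_cyclic_subgroups_general
    {G : Type*} [CommGroup G] [Finite G] {ι : Type*} [Fintype ι] {q : ℕ}
    (hG : Nat.card G = q ^ 2) (hι : Fintype.card ι = q + 1) {H : ι → Subgroup G}
    (hd : Pairwise fun i j => Disjoint (H i) (H j)) (hcard : ∀ j, Nat.card (H j) = q) :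
    (⨆ j, (BMap (H j).subtype).range).index = q ^ (q - 1) := by
  have hq : 0 < q := Nat.pos_of_ne_zero fun h => Nat.card_pos.ne' (by simpa [h] using hG)
  have hsum : ∑ j, (Nat.card (H j) - 1) = Nat.card G - 1 := by
    simp only [hcard, hG, Finset.sum_const, Finset.card_univ, hι, smul_eq_mul]
    simpa using (Nat.sq_sub_sq q 1).symm
  have hindex := SingularOrbitData.index_iSup_range_BMap_mul_card hd
    (SingularOrbitData.exists_mem_of_sum_card_sub_one hd hsum)
  simp only [hG, hcard, Finset.prod_const, Finset.card_univ, hι] at hindex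
  refine Nat.eq_of_mul_eq_mul_right (pow_pos hq 2) (hindex.trans ?_)
  rw [← pow_add, show q - 1 + 2 = q + 1 by lia]

/-- Let `p` be an odd prime, `G = ℤ/pℤ × ℤ/pℤ`, and `G₀, …, G_p` the
`p+1` distinct subgroups of `G` of order `p`, with inclusions `i_j : G_j → G`. Then the
subgroup of `𝔹_G` generated by the images `𝔹_{i_j}(𝔹_{G_j})` has index `p^(p-1)` in
`𝔹_G`. -/
theorem index_of_subgroup_generated_by_cyclic_subgroups
    (p : ℕ) (hp : p.Prime) (hodd : Odd p)
    (Gsub : Fin (p + 1) → Subgroup (Multiplicative (ZMod p × ZMod p)))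
    (hinj : Function.Injective Gsub)
    (hcard : ∀ j, Nat.card (Gsub j) = p) :
    (⨆ j : Fin (p + 1), (BMap (Gsub j).subtype).range).index = p ^ (p - 1) := by
  have : NeZero p := ⟨hp.ne_zero⟩
  exact index_of_subgroup_generated_by_cyclic_subgroups_general (by simp [sq]) (by simp)
    (fun i j hij => SingularOrbitData.disjoint_of_card_eq_prime hp (hcard i) (hcard j)
      (hinj.ne hij)) hcard
end
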